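/- arXiv:2501.03742 — 3 statements merged into one kernel-verified Lean document; each statement's English description precedes it below -/
import Mathlib

section
/- Let A ∈ ℝ^{n×n} be symmetric positive definite, let Q ∈ ℝ^{n×n} satisfy ‖QᵀQ − I‖₂ ≤ ε for some ε < 1, set Ã = QᵀAQ, and let E be a symmetric matrix satisfying |E_{ij}| ≤ η√(ã_{ii}ã_{jj}) for all i, j, with n·η·κ₂ˢ(Ã) < 1. Then for every k, |λ_k(Ã + E) − λ_k(A)| ≤ (ε + (1+ε)·n·η·κ₂ˢ(Ã))·λ_k(A). -/
/-!
The argument compares Rayleigh quotients. Write `M = Qᵀ A Q` and `δ = n η κₛ(M)`.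

The Courant–Fischer principle is used in the form of `le_eigval` and `eigval_le`: if the quadratic
form of `N` at `P x` is controlled by that of `M` at `x`, with `P` injective, then the `k`-th
eigenvalues are controlled in the same way. Both follow from `exists_compare`, a dimension count in
the eigenbases of the two matrices.

* Multiplicative perturbation (Ostrowski): `‖Qᵀ Q - 1‖ ≤ ε` says that `|Q x|²` lies between
  `(1 - ε) |x|²` and `(1 + ε) |x|²`, and `(Q x)ᵀ A (Q x) = xᵀ M x`. Hence
  `(1 - ε) λₖ(A) ≤ λₖ(M) ≤ (1 + ε) λₖ(A)`.
* Additive perturbation: `abs_quadForm_perturbation_le` gives `|xᵀ E x| ≤ δ xᵀ M x`, and as `δ < 1`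
  this yields `(1 - δ) λₖ(M) ≤ λₖ(M + E) ≤ (1 + δ) λₖ(M)`.

The two estimates combine to the bound `ε + (1 + ε) δ` on the relative error.
-/

open Matrix BigOperators

/-- The `k`-th largest eigenvalue of a real matrix (zero if not Hermitian). -/
noncomputable def eigval {n : ℕ} (A : Matrix (Fin n) (Fin n) ℝ) (k : Fin n) : ℝ :=
  if h : A.IsHermitian then h.eigenvalues ((Tuple.sort h.eigenvalues) k.rev) else 0

/-- The spectral (operator 2-) norm of a real matrix. -/
noncomputable def specNorm {n : ℕ} (A : Matrix (Fin n) (Fin n) ℝ) : ℝ :=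
  ‖LinearMap.toContinuousLinearMap (Matrix.toEuclideanLin A)‖

/-- The Frobenius norm of a real matrix. -/
noncomputable def frobNorm {n : ℕ} (A : Matrix (Fin n) (Fin n) ℝ) : ℝ :=
  Real.sqrt (∑ i, ∑ j, (A i j) ^ 2)

/-- The off-quantity `off(A) = ‖A - diag(A)‖_F`. -/
noncomputable def offQ {n : ℕ} (A : Matrix (Fin n) (Fin n) ℝ) : ℝ :=
  frobNorm (A - Matrix.diagonal (fun i => A i i))

/-- Condition number κ₂(A) = λ₁(A)/λ_n(A). -/
noncomputable def kappa {n : ℕ} [NeZero n] (A : Matrix (Fin n) (Fin n) ℝ) : ℝ :=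
  eigval A 0 / eigval A (Fin.rev 0)

/-- The diagonally scaled matrix `D A D`, `D = diag(a_ii^{-1/2})`. -/
noncomputable def scaled {n : ℕ} (A : Matrix (Fin n) (Fin n) ℝ) : Matrix (Fin n) (Fin n) ℝ :=
  Matrix.diagonal (fun i => (Real.sqrt (A i i))⁻¹) * A *
    Matrix.diagonal (fun i => (Real.sqrt (A i i))⁻¹)

/-- The scaled condition number κ₂ˢ(A) = κ₂(D A D). -/
noncomputable def kappaS {n : ℕ} [NeZero n] (A : Matrix (Fin n) (Fin n) ℝ) : ℝ :=
  kappa (scaled A)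

/-- Entrywise absolute value of a matrix. -/
noncomputable def absM {n : ℕ} (A : Matrix (Fin n) (Fin n) ℝ) : Matrix (Fin n) (Fin n) ℝ :=
  Matrix.of fun i j => |A i j|

theorem eigval_antitone {n : ℕ} (M : Matrix (Fin n) (Fin n) ℝ) : Antitone (eigval M) := by
  intro i j hij
  unfold eigval
  split_ifs with h
  · exact Tuple.monotone_sort h.eigenvalues (Fin.rev_le_rev.mpr hij)
  · exact le_rfl

theorem eigval_pos {n : ℕ} {M : Matrix (Fin n) (Fin n) ℝ} (h : M.PosDef) (k : Fin n) :
    0 < eigval M k := by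
  rw [eigval, dif_pos h.isHermitian]
  exact h.eigenvalues_pos _

/-- Orthogonal coordinates `U x` in which the quadratic form of `M` is diagonal, indexed so that the
coefficients are the eigenvalues in the decreasing order of `eigval`. -/
theorem exists_diagonalization {n : ℕ} {M : Matrix (Fin n) (Fin n) ℝ} (h : M.IsHermitian) :
    ∃ U : Matrix (Fin n) (Fin n) ℝ, (∀ x, x ⬝ᵥ x = ∑ i, (U *ᵥ x) i ^ 2) ∧
      ∀ x, x ⬝ᵥ (M *ᵥ x) = ∑ i, eigval M i * (U *ᵥ x) i ^ 2 := by
  let V : Matrix (Fin n) (Fin n) ℝ := h.eigenvectorUnitary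
  let σ : Equiv.Perm (Fin n) := Fin.revPerm.trans (Tuple.sort h.eigenvalues)
  have hV : V * Vᵀ = 1 := by
    have := Unitary.coe_mul_star_self h.eigenvectorUnitary
    simpa [V, star_eq_conjTranspose] using this
  have hM : M = V * diagonal h.eigenvalues * Vᵀ := by
    have := h.spectral_theorem
    simpa [V, star_eq_conjTranspose, Unitary.conjStarAlgAut_apply, Function.comp_def] using this
  have hval : ∀ i, eigval M i = h.eigenvalues (σ i) := by
    intro i
    rw [eigval, dif_pos h]; rfl
  have hU : ∀ x i, (Vᵀ.submatrix σ id *ᵥ x) i = (Vᵀ *ᵥ x) (σ i) := fun x i => rfl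
  refine ⟨Vᵀ.submatrix σ id, fun x => ?_, fun x => ?_⟩
  · simp only [hU]
    rw [Equiv.sum_comp σ (fun i => (Vᵀ *ᵥ x) i ^ 2)]
    have : x ⬝ᵥ x = x ⬝ᵥ ((V * Vᵀ) *ᵥ x) := by rw [hV, one_mulVec]
    rw [this, ← mulVec_mulVec, dotProduct_mulVec, ← mulVec_transpose]
    simp [dotProduct, sq]
  · simp only [hU, hval]
    rw [Equiv.sum_comp σ (fun i => h.eigenvalues i * (Vᵀ *ᵥ x) i ^ 2)]
    conv_lhs => rw [hM]
    rw [← mulVec_mulVec, ← mulVec_mulVec, dotProduct_mulVec, ← mulVec_transpose]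
    simp only [dotProduct, mulVec_diagonal]
    exact Finset.sum_congr rfl fun i _ => by ring

/-- The dimension count behind the Courant–Fischer theorem: requiring that `R x` has no
component along the eigenvectors of `M` of index `> k`, and `P x` none along those of `N` of index
`< k`, imposes `n - 1` homogeneous linear equations, which have a common nonzero solution. -/
theorem exists_compare {n : ℕ} {M N : Matrix (Fin n) (Fin n) ℝ} (hM : M.IsHermitian)
    (hN : N.IsHermitian) (R P : Matrix (Fin n) (Fin n) ℝ) (k : Fin n) :
    ∃ x, x ≠ 0 ∧
      eigval M k * ((R *ᵥ x) ⬝ᵥ (R *ᵥ x)) ≤ (R *ᵥ x) ⬝ᵥ (M *ᵥ (R *ᵥ x)) ∧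
      (P *ᵥ x) ⬝ᵥ (N *ᵥ (P *ᵥ x)) ≤ eigval N k * ((P *ᵥ x) ⬝ᵥ (P *ᵥ x)) := by
  obtain ⟨U, hU1, hU2⟩ := exists_diagonalization hM
  obtain ⟨V, hV1, hV2⟩ := exists_diagonalization hN
  -- Row `k` of `L` is zero, which makes `L` singular; the other rows encode the equations.
  let L : Matrix (Fin n) (Fin n) ℝ :=
    of fun i => if k < i then (U * R) i else if i < k then (V * P) i else 0
  have hL : L.det = 0 := det_eq_zero_of_row_eq_zero k (by simp [L])
  obtain ⟨x, hx0, hx⟩ := exists_mulVec_eq_zero_iff.mpr hL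
  have h1 : ∀ i, k < i → (U *ᵥ (R *ᵥ x)) i = 0 := by
    intro i hi
    have := congrFun hx i
    rw [mulVec_mulVec]
    simpa [mulVec, L, hi] using this
  have h2 : ∀ i, i < k → (V *ᵥ (P *ᵥ x)) i = 0 := by
    intro i hi
    have := congrFun hx i
    rw [mulVec_mulVec]
    simpa [mulVec, L, hi, not_lt.mpr hi.le] using this
  refine ⟨x, hx0, ?_, ?_⟩
  · rw [hU1, hU2, Finset.mul_sum]
    refine Finset.sum_le_sum fun i _ => ?_
    rcases lt_or_ge k i with hi | hi
    · simp [h1 i hi]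
    · exact mul_le_mul_of_nonneg_right (eigval_antitone M hi) (sq_nonneg _)
  · rw [hV1, hV2, Finset.mul_sum]
    refine Finset.sum_le_sum fun i _ => ?_
    rcases lt_or_ge i k with hi | hi
    · simp [h2 i hi]
    · exact mul_le_mul_of_nonneg_right (eigval_antitone N hi) (sq_nonneg _)

theorem dotProduct_self_pos {n : ℕ} {x : Fin n → ℝ} (hx : x ≠ 0) : 0 < x ⬝ᵥ x := by
  have h0 : 0 ≤ x ⬝ᵥ x := by simpa using dotProduct_star_self_nonneg x
  exact h0.lt_of_ne fun h => hx (dotProduct_self_eq_zero.mp h.symm)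

/-- Lower bounds on the Rayleigh quotient of `N` at the points `P x`, for the `x` whose `M`-quotient
is at least the `k`-th eigenvalue of `M`, bound the `k`-th eigenvalue of `N` from below. -/
theorem le_eigval {n : ℕ} {M N P : Matrix (Fin n) (Fin n) ℝ} (hM : M.IsHermitian)
    (hN : N.IsHermitian) (hP : ∀ x, P *ᵥ x = 0 → x = 0) (k : Fin n) {ν : ℝ}
    (H : ∀ x, eigval M k * (x ⬝ᵥ x) ≤ x ⬝ᵥ (M *ᵥ x) →
      ν * ((P *ᵥ x) ⬝ᵥ (P *ᵥ x)) ≤ (P *ᵥ x) ⬝ᵥ (N *ᵥ (P *ᵥ x))) : ν ≤ eigval N k := by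
  obtain ⟨x, hx0, h1, h2⟩ := exists_compare hM hN 1 P k
  rw [one_mulVec] at h1
  exact le_of_mul_le_mul_right ((H x h1).trans h2)
    (dotProduct_self_pos fun h => hx0 (hP x h))

/-- The dual of `le_eigval`, with all inequalities reversed. -/
theorem eigval_le {n : ℕ} {M N P : Matrix (Fin n) (Fin n) ℝ} (hM : M.IsHermitian)
    (hN : N.IsHermitian) (hP : ∀ x, P *ᵥ x = 0 → x = 0) (k : Fin n) {ν : ℝ}
    (H : ∀ x, x ⬝ᵥ (M *ᵥ x) ≤ eigval M k * (x ⬝ᵥ x) →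
      (P *ᵥ x) ⬝ᵥ (N *ᵥ (P *ᵥ x)) ≤ ν * ((P *ᵥ x) ⬝ᵥ (P *ᵥ x))) : eigval N k ≤ ν := by
  obtain ⟨x, hx0, h1, h2⟩ := exists_compare hN hM P 1 k
  rw [one_mulVec] at h2
  exact le_of_mul_le_mul_right (h1.trans (H x h2))
    (dotProduct_self_pos fun h => hx0 (hP x h))

/-- The last index `Fin.rev 0` gives the smallest eigenvalue, a lower bound for the Rayleigh
quotient. -/
theorem eigval_last_le {n : ℕ} [NeZero n] {M : Matrix (Fin n) (Fin n) ℝ} (h : M.IsHermitian)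
    (x : Fin n → ℝ) : eigval M (Fin.rev 0) * (x ⬝ᵥ x) ≤ x ⬝ᵥ (M *ᵥ x) := by
  obtain ⟨U, h1, h2⟩ := exists_diagonalization h
  rw [h1, h2, Finset.mul_sum]
  refine Finset.sum_le_sum fun i _ => mul_le_mul_of_nonneg_right (eigval_antitone M ?_) (sq_nonneg _)
  rw [← Fin.rev_rev i]; exact Fin.rev_le_rev.mpr (Fin.zero_le _)

theorem le_eigval_zero {n : ℕ} [NeZero n] {M : Matrix (Fin n) (Fin n) ℝ} (h : M.IsHermitian)
    (x : Fin n → ℝ) : x ⬝ᵥ (M *ᵥ x) ≤ eigval M 0 * (x ⬝ᵥ x) := by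
  obtain ⟨U, h1, h2⟩ := exists_diagonalization h
  rw [h1, h2, Finset.mul_sum]
  exact Finset.sum_le_sum fun i _ =>
    mul_le_mul_of_nonneg_right (eigval_antitone M (Fin.zero_le _)) (sq_nonneg _)

theorem abs_quadForm_le {n : ℕ} (B : Matrix (Fin n) (Fin n) ℝ) (x : Fin n → ℝ) :
    |x ⬝ᵥ (B *ᵥ x)| ≤ specNorm B * (x ⬝ᵥ x) := by
  have h1 : x ⬝ᵥ (B *ᵥ x) =
      inner ℝ (WithLp.toLp 2 x) (toEuclideanLin B (WithLp.toLp 2 x)) := by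
    simp [EuclideanSpace.inner_eq_star_dotProduct, toLpLin_apply, dotProduct_comm]
  have h2 : x ⬝ᵥ x = ‖(WithLp.toLp 2 x : EuclideanSpace ℝ (Fin n))‖ ^ 2 := by
    rw [EuclideanSpace.norm_sq_eq]
    simp [dotProduct, sq]
  have h3 := (LinearMap.toContinuousLinearMap (toEuclideanLin B)).le_opNorm (WithLp.toLp 2 x)
  rw [h1, h2]
  calc _ ≤ ‖(WithLp.toLp 2 x : EuclideanSpace ℝ (Fin n))‖ *
        ‖toEuclideanLin B (WithLp.toLp 2 x)‖ := abs_real_inner_le_norm _ _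
    _ ≤ ‖(WithLp.toLp 2 x : EuclideanSpace ℝ (Fin n))‖ * (specNorm B *
        ‖(WithLp.toLp 2 x : EuclideanSpace ℝ (Fin n))‖) :=
      mul_le_mul_of_nonneg_left h3 (norm_nonneg _)
    _ = _ := by ring

/-- A perturbation that is small entrywise relative to the diagonal of `M` is small relative to `M` as
a quadratic form. With `y = diag(√mᵢᵢ) x` and `S = scaled M`, the left side is at most
`η (∑ |yᵢ|)² ≤ n η |y|²`, while `xᵀ M x = yᵀ S y ≥ λ_min(S) |y|²`; finally `1 / λ_min(S) ≤ κ(S)`,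
because `S` has unit diagonal and hence `λ_max(S) ≥ 1`. -/
theorem abs_quadForm_perturbation_le {n : ℕ} [NeZero n] {M E : Matrix (Fin n) (Fin n) ℝ}
    {η : ℝ} (hM : M.PosDef) (hE : ∀ i j, |E i j| ≤ η * Real.sqrt (M i i * M j j))
    (x : Fin n → ℝ) :
    |x ⬝ᵥ (E *ᵥ x)| ≤ n * η * kappaS M * (x ⬝ᵥ (M *ᵥ x)) := by
  have hd : ∀ i, 0 < M i i := fun i => hM.diag_pos
  set d : Fin n → ℝ := fun i => Real.sqrt (M i i) with hdd
  have hdpos : ∀ i, 0 < d i := fun i => Real.sqrt_pos.mpr (hd i)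
  have hη : 0 ≤ η := by
    have h := (abs_nonneg _).trans (hE 0 0)
    rw [Real.sqrt_mul_self (hd 0).le] at h
    exact nonneg_of_mul_nonneg_left h (hd 0)
  have hS : (scaled M).PosDef := by
    have hinj : Function.Injective (diagonal fun i => (d i)⁻¹).mulVec := by
      intro u v huv
      funext i
      have := congrFun huv i
      simpa [mulVec_diagonal, (hdpos i).ne'] using this
    have := hM.conjTranspose_mul_mul_same hinj
    simpa [scaled, diagonal_conjTranspose] using this
  have hlam : 0 < eigval (scaled M) (Fin.rev 0) := eigval_pos hS _
  have hone : 1 ≤ eigval (scaled M) 0 := by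
    have h := le_eigval_zero hS.isHermitian (Pi.single 0 1)
    have h00 : scaled M 0 0 = 1 := by
      have h0 := Real.mul_self_sqrt (hd 0).le
      have h1 := (Real.sqrt_pos.mpr (hd 0)).ne'
      simp only [scaled, mul_diagonal, diagonal_mul]
      field_simp
      nlinarith
    simpa [h00] using h
  set y : Fin n → ℝ := fun i => d i * x i with hy
  have hyM : y ⬝ᵥ (scaled M *ᵥ y) = x ⬝ᵥ (M *ᵥ x) := by
    simp only [dotProduct, mulVec, Finset.mul_sum, scaled, mul_diagonal, diagonal_mul, hy]
    refine Finset.sum_congr rfl fun i _ => Finset.sum_congr rfl fun j _ => ?_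
    have h1 := (hdpos i).ne'
    have h2 := (hdpos j).ne'
    simp only [hdd] at h1 h2 ⊢
    field_simp
  have hyE : |x ⬝ᵥ (E *ᵥ x)| ≤ n * η * (y ⬝ᵥ y) := by
    have hcs : (∑ i, |y i|) ^ 2 ≤ n * (y ⬝ᵥ y) := by
      have := sq_sum_le_card_mul_sum_sq (s := Finset.univ) (f := fun i => |y i|)
      simpa [dotProduct, sq_abs, ← sq] using this
    have hb : |x ⬝ᵥ (E *ᵥ x)| ≤ η * (∑ i, |y i|) ^ 2 := by
      rw [sq, Finset.sum_mul_sum, Finset.mul_sum]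
      refine (Finset.abs_sum_le_sum_abs _ _).trans (Finset.sum_le_sum fun i _ => ?_)
      rw [abs_mul, mulVec, dotProduct, Finset.mul_sum]
      refine (mul_le_mul_of_nonneg_left (Finset.abs_sum_le_sum_abs _ _) (abs_nonneg _)).trans ?_
      rw [Finset.mul_sum]
      refine Finset.sum_le_sum fun j _ => ?_
      have h := hE i j
      rw [Real.sqrt_mul (hd i).le] at h
      have h' := mul_le_mul_of_nonneg_left h (mul_nonneg (abs_nonneg (x i)) (abs_nonneg (x j)))
      simp only [hy, abs_mul, abs_of_pos (hdpos _)]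
      calc _ = |x i| * |x j| * |E i j| := by ring
        _ ≤ _ := h'
        _ = _ := by simp only [hdd]; ring
    calc _ ≤ _ := hb
      _ ≤ η * (n * (y ⬝ᵥ y)) := mul_le_mul_of_nonneg_left hcs hη
      _ = _ := by ring
  have hmin := eigval_last_le hS.isHermitian y
  rw [hyM] at hmin
  have hyy : 0 ≤ y ⬝ᵥ y := by simpa using dotProduct_star_self_nonneg y
  have hle : y ⬝ᵥ y ≤ kappaS M * (x ⬝ᵥ (M *ᵥ x)) := by
    rw [kappaS, kappa, div_mul_eq_mul_div, le_div_iff₀ hlam]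
    have hq : 0 ≤ x ⬝ᵥ (M *ᵥ x) := (mul_nonneg hlam.le hyy).trans hmin
    nlinarith
  calc _ ≤ _ := hyE
    _ ≤ n * η * (kappaS M * (x ⬝ᵥ (M *ᵥ x))) :=
      mul_le_mul_of_nonneg_left hle (by positivity)
    _ = _ := by ring

/-- combined preconditioning/perturbation eigenvalue bound. -/
theorem stmt2 {n : ℕ} [NeZero n] (A Q E : Matrix (Fin n) (Fin n) ℝ) (ε η : ℝ)
    (hA : A.PosDef) (hQ : specNorm (Qᵀ * Q - 1) ≤ ε) (hε : ε < 1)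
    (hE : E.IsHermitian)
    (hEb : ∀ i j, |E i j| ≤
      η * Real.sqrt ((Qᵀ * A * Q) i i * (Qᵀ * A * Q) j j))
    (hcond : n * η * kappaS (Qᵀ * A * Q) < 1) (k : Fin n) :
    |eigval (Qᵀ * A * Q + E) k - eigval A k| ≤
      (ε + (1 + ε) * n * η * kappaS (Qᵀ * A * Q)) * eigval A k := by
  have hε0 : 0 ≤ ε := (norm_nonneg _).trans hQ
  have hnn : ∀ x : Fin n → ℝ, 0 ≤ x ⬝ᵥ x := fun x => by
    simpa using dotProduct_star_self_nonneg x
  have hquad : ∀ x, |(Q *ᵥ x) ⬝ᵥ (Q *ᵥ x) - x ⬝ᵥ x| ≤ ε * (x ⬝ᵥ x) := by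
    intro x
    have h := (abs_quadForm_le (Qᵀ * Q - 1) x).trans (mul_le_mul_of_nonneg_right hQ (hnn x))
    rwa [sub_mulVec, one_mulVec, dotProduct_sub, ← mulVec_mulVec, dotProduct_mulVec,
      ← mulVec_transpose, transpose_transpose] at h
  have hinj : ∀ x, Q *ᵥ x = 0 → x = 0 := by
    intro x hx
    have h := hquad x
    rw [hx, zero_dotProduct, zero_sub, abs_neg, abs_of_nonneg (hnn x)] at h
    have : x ⬝ᵥ x = 0 := by nlinarith [hnn x]
    exact dotProduct_self_eq_zero.mp this
  have hMpd : (Qᵀ * A * Q).PosDef := by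
    have := hA.conjTranspose_mul_mul_same (B := Q) (fun u v huv => by
      have : Q *ᵥ (u - v) = 0 := by rw [mulVec_sub]; exact sub_eq_zero.mpr huv
      exact sub_eq_zero.mp (hinj _ this))
    simpa using this
  have hpert := abs_quadForm_perturbation_le hMpd hEb
  have hcong : ∀ x, (Q *ᵥ x) ⬝ᵥ (A *ᵥ (Q *ᵥ x)) = x ⬝ᵥ ((Qᵀ * A * Q) *ᵥ x) := by
    intro x
    rw [← mulVec_mulVec, ← mulVec_mulVec, dotProduct_mulVec x, ← mulVec_transpose,
      transpose_transpose]
  set M := Qᵀ * A * Q with hMdef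
  set δ := n * η * kappaS M with hδ
  have hMpos : 0 < eigval M k := eigval_pos hMpd k
  have hApos : 0 < eigval A k := eigval_pos hA k
  -- At a basis vector, `hpert` reads `|E 0 0| ≤ δ * M 0 0`.
  have hδ0 : 0 ≤ δ := by
    by_contra! hneg
    have h := (abs_nonneg _).trans (hpert (Pi.single 0 1))
    have h0 : 0 < M 0 0 := hMpd.diag_pos
    simp at h
    nlinarith
  have hup : eigval M k ≤ (1 + ε) * eigval A k := by
    have : eigval M k / (1 + ε) ≤ eigval A k := by
      refine le_eigval hMpd.isHermitian hA.isHermitian hinj k fun x hx => ?_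
      rw [hcong]
      refine le_trans ?_ hx
      rw [div_mul_eq_mul_div, div_le_iff₀ (by linarith)]
      have := (abs_le.mp (hquad x)).2
      nlinarith
    rwa [div_le_iff₀' (by linarith)] at this
  have hlow : (1 - ε) * eigval A k ≤ eigval M k := by
    have : eigval A k ≤ eigval M k / (1 - ε) := by
      refine eigval_le hMpd.isHermitian hA.isHermitian hinj k fun x hx => ?_
      rw [hcong]
      refine hx.trans ?_
      rw [div_mul_eq_mul_div, le_div_iff₀ (by linarith)]
      have := (abs_le.mp (hquad x)).1
      nlinarith
    rwa [le_div_iff₀' (by linarith)] at this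
  have hH : (M + E).IsHermitian := hMpd.isHermitian.add hE
  have hpup : eigval (M + E) k ≤ (1 + δ) * eigval M k := by
    refine eigval_le (P := 1) hMpd.isHermitian hH (by simp) k fun x hx => ?_
    rw [one_mulVec, add_mulVec, dotProduct_add]
    have := (abs_le.mp (hpert x)).2
    nlinarith
  have hplow : (1 - δ) * eigval M k ≤ eigval (M + E) k := by
    refine le_eigval (P := 1) hMpd.isHermitian hH (by simp) k fun x hx => ?_
    rw [one_mulVec, add_mulVec, dotProduct_add]
    have := (abs_le.mp (hpert x)).1
    nlinarith
  have hfin : (ε + (1 + ε) * n * η * kappaS M) = ε + (1 + ε) * δ := by rw [hδ]; ring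
  rw [hfin, abs_le]
  constructor <;> nlinarith
end

section
/- Let Ã ∈ ℝ^{n×n} be symmetric positive definite and suppose θ := off(Ã)/min_i ã_{ii} < 1. Then κ₂ˢ(Ã) ≤ (1 + θ)/(1 − θ). In particular, if off(Ã)/min_i ã_{ii} < 1/2, then κ₂ˢ(Ã) < 3. -/
/-!
The scaled matrix `S = D A D` has unit diagonal, and its off-diagonal entries
`a_ij / (√a_ii √a_jj)` are bounded in absolute value by `|a_ij| / min_k a_kk`.
Hence `‖S - 1‖_F ≤ θ` (`frob_scaled_sub_one`). If `S v = μ v` then `(S - 1) v = (μ - 1) v`, and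
the Cauchy–Schwarz bound `‖B v‖ ≤ ‖B‖_F ‖v‖` gives `|μ - 1| ≤ θ` (`eigval_scaled_bound`).
All eigenvalues of `S` therefore lie in `[1 - θ, 1 + θ]`, which bounds their ratio.
-/

open Matrix BigOperators

/-- The Frobenius norm dominates the Euclidean operator norm, in squared form. -/
lemma sum_mulVec_sq_le {n : ℕ} (B : Matrix (Fin n) (Fin n) ℝ) (v : Fin n → ℝ) :
    ∑ i, ((B *ᵥ v) i) ^ 2 ≤ (∑ i, ∑ j, (B i j) ^ 2) * ∑ j, (v j) ^ 2 := by
  rw [Finset.sum_mul]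
  exact Finset.sum_le_sum fun i _ => Finset.sum_mul_sq_le_sq_mul_sq Finset.univ (B i) v

lemma diag_iInf_pos {n : ℕ} [NeZero n] {A : Matrix (Fin n) (Fin n) ℝ} (hA : A.PosDef) :
    0 < ⨅ i, A i i := by
  obtain ⟨i, hi⟩ := exists_eq_ciInf_of_finite (f := fun i => A i i)
  rw [← hi]
  exact hA.diag_pos

lemma scaled_apply {n : ℕ} (A : Matrix (Fin n) (Fin n) ℝ) (i j : Fin n) :
    scaled A i j = (Real.sqrt (A i i))⁻¹ * A i j * (Real.sqrt (A j j))⁻¹ := by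
  simp [scaled, Matrix.mul_diagonal, Matrix.diagonal_mul]

lemma scaled_isHermitian {n : ℕ} {A : Matrix (Fin n) (Fin n) ℝ} (hA : A.PosDef) :
    (scaled A).IsHermitian := by
  ext i j
  have h : A j i = A i j := by simpa using hA.isHermitian.apply i j
  simp only [Matrix.conjTranspose_apply, scaled_apply, star_trivial, h]
  ring

lemma offQ_nonneg {n : ℕ} (A : Matrix (Fin n) (Fin n) ℝ) : 0 ≤ offQ A :=
  Real.sqrt_nonneg _

lemma offQ_sq {n : ℕ} (A : Matrix (Fin n) (Fin n) ℝ) :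
    offQ A ^ 2 = ∑ i, ∑ j, ((A - Matrix.diagonal (fun i => A i i)) i j) ^ 2 :=
  Real.sq_sqrt (by positivity)

/-- `‖S - 1‖_F ≤ θ` for the scaled matrix `S`, in squared form. -/
lemma frob_scaled_sub_one {n : ℕ} [NeZero n] {A : Matrix (Fin n) (Fin n) ℝ} (hA : A.PosDef) :
    ∑ i, ∑ j, ((scaled A - 1) i j) ^ 2 ≤ (offQ A / (⨅ i, A i i)) ^ 2 := by
  have hm := diag_iInf_pos hA
  rw [div_pow, offQ_sq, Finset.sum_div]
  refine Finset.sum_le_sum fun i _ => ?_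
  rw [Finset.sum_div]
  refine Finset.sum_le_sum fun j _ => ?_
  have hd : ∀ k, 0 < A k k := fun k => hA.diag_pos
  have hle : ∀ k, (⨅ i, A i i) ≤ A k k := fun k => ciInf_le (Set.finite_range _).bddBelow k
  by_cases hij : i = j
  · subst hij
    have h1 : (Real.sqrt (A i i))⁻¹ * A i i * (Real.sqrt (A i i))⁻¹ = 1 := by
      have hs := Real.sqrt_pos.2 (hd i)
      field_simp
      exact (Real.sq_sqrt (hd i).le).symm
    simp [scaled_apply, h1]
  · simp only [Matrix.sub_apply, scaled_apply, Matrix.one_apply_ne hij,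
      Matrix.diagonal_apply_ne _ hij, sub_zero, mul_pow, inv_pow, Real.sq_sqrt (hd _).le]
    have : (A i i)⁻¹ * A i j ^ 2 * (A j j)⁻¹ = A i j ^ 2 / (A i i * A j j) := by
      have := (hd i).ne'
      have := (hd j).ne'
      field_simp
    rw [this, sq (⨅ i, A i i)]
    gcongr
    · exact (hd i).le
    · exact hle i
    · exact hle j

/-- Every eigenvalue of the scaled matrix is within `θ` of `1`. -/
lemma eigval_scaled_bound {n : ℕ} [NeZero n] {A : Matrix (Fin n) (Fin n) ℝ} (hA : A.PosDef)
    (k : Fin n) : |eigval (scaled A) k - 1| ≤ offQ A / (⨅ i, A i i) := by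
  have hS := scaled_isHermitian hA
  simp only [eigval, dif_pos hS]
  set l := Tuple.sort hS.eigenvalues k.rev
  set v : Fin n → ℝ := ⇑(hS.eigenvectorBasis l)
  have hv : ∑ j, (v j) ^ 2 = 1 := by
    have h := hS.eigenvectorBasis.orthonormal.1 l
    have h2 := EuclideanSpace.norm_sq_eq (hS.eigenvectorBasis l)
    rw [h] at h2
    simpa using h2.symm
  have hB : (scaled A - 1) *ᵥ v = (hS.eigenvalues l - 1) • v := by
    rw [Matrix.sub_mulVec, Matrix.one_mulVec, hS.mulVec_eigenvectorBasis l, sub_smul, one_smul]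
  have h := sum_mulVec_sq_le (scaled A - 1) v
  simp only [hB, Pi.smul_apply, smul_eq_mul, mul_pow] at h
  rw [← Finset.mul_sum, hv, mul_one, mul_one] at h
  exact abs_le_of_sq_le_sq (h.trans (frob_scaled_sub_one hA))
    (div_nonneg (offQ_nonneg A) (diag_iInf_pos hA).le)

/-- if θ = off(Ã)/min_i ã_ii < 1 then κ₂ˢ(Ã) ≤ (1+θ)/(1−θ);
in particular θ < 1/2 gives κ₂ˢ(Ã) < 3 (with `At` for Ã). -/
theorem stmt12 {n : ℕ} [NeZero n] (At : Matrix (Fin n) (Fin n) ℝ)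
    (hA : At.PosDef) (hθ : offQ At / (⨅ i, At i i) < 1) :
    kappaS At ≤ (1 + offQ At / (⨅ i, At i i)) / (1 - offQ At / (⨅ i, At i i)) ∧
      (offQ At / (⨅ i, At i i) < 1 / 2 → kappaS At < 3) := by
  have hθ0 := div_nonneg (offQ_nonneg At) (diag_iInf_pos hA).le
  have h1 := abs_le.1 (eigval_scaled_bound hA 0)
  have h2 := abs_le.1 (eigval_scaled_bound hA (Fin.rev 0))
  have key : kappaS At ≤ (1 + offQ At / (⨅ i, At i i)) / (1 - offQ At / (⨅ i, At i i)) :=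
    div_le_div₀ (by linarith) (by linarith [h1.2]) (by linarith) (by linarith [h2.1])
  refine ⟨key, fun h => key.trans_lt ?_⟩
  rw [div_lt_iff₀ (by linarith)]
  linarith
end

section
/- Let A ∈ ℝ^{n×n} be symmetric positive definite, let Q ∈ ℝ^{n×n} satisfy ‖QᵀQ − I‖₂ ≤ ε for some ε < 1, and set Ã = QᵀAQ. If off(Ã) ≤ c‖A‖_F for some c ≥ 0, then off(Ã)/min_i ã_{ii} ≤ c·n^{1/2}·κ₂(A)/(1 − ε). -/
/-!
The diagonal entry `ã_ii = q_iᵀ A q_i`, with `q_i` the `i`-th column of `Q`, is at least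
`λ_n(A) ‖q_i‖²`, and `‖q_i‖² = (QᵀQ)_ii ≥ 1 - ε` because every diagonal entry of `QᵀQ - I` is
bounded by its spectral norm. Hence `min_i ã_ii ≥ (1 - ε) λ_n(A) > 0`. On the other hand
`‖A‖_F² = tr(A²)` is the sum of the squared eigenvalues, so `‖A‖_F ≤ √n λ₁(A)`. Dividing
`off(Ã) ≤ c ‖A‖_F` by the lower bound for the minimum gives the claim.
-/

open Matrix BigOperators

lemma eigval_last_le_s17 {n : ℕ} [NeZero n] {A : Matrix (Fin n) (Fin n) ℝ} (h : A.IsHermitian)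
    (j : Fin n) : eigval A (Fin.rev 0) ≤ h.eigenvalues j := by
  rw [eigval, dif_pos h, Fin.rev_rev]
  have := Tuple.monotone_sort h.eigenvalues (Fin.zero_le ((Tuple.sort h.eigenvalues).symm j))
  simpa using this

lemma le_eigval_zero_s17 {n : ℕ} [NeZero n] {A : Matrix (Fin n) (Fin n) ℝ} (h : A.IsHermitian)
    (j : Fin n) : h.eigenvalues j ≤ eigval A 0 := by
  rw [eigval, dif_pos h]
  have hle : (Tuple.sort h.eigenvalues).symm j ≤ Fin.rev 0 := by
    rw [← Fin.rev_le_rev, Fin.rev_rev]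
    exact Fin.zero_le _
  have := Tuple.monotone_sort h.eigenvalues hle
  simpa using this

lemma eigval_last_pos {n : ℕ} [NeZero n] {A : Matrix (Fin n) (Fin n) ℝ} (hA : A.PosDef) :
    0 < eigval A (Fin.rev 0) := by
  rw [eigval, dif_pos hA.isHermitian]
  exact hA.eigenvalues_pos _

/-- The spectral theorem with the unitary factors written as plain matrices. -/
lemma spectral_decomp {n : ℕ} {A : Matrix (Fin n) (Fin n) ℝ} (h : A.IsHermitian) :
    ∃ U : Matrix (Fin n) (Fin n) ℝ, Uᵀ * U = 1 ∧ U * Uᵀ = 1 ∧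
      A = U * Matrix.diagonal h.eigenvalues * Uᵀ := by
  refine ⟨h.eigenvectorUnitary, ?_, ?_, ?_⟩
  · simpa [star_eq_conjTranspose] using Unitary.coe_star_mul_self h.eigenvectorUnitary
  · simpa [star_eq_conjTranspose] using Unitary.coe_mul_star_self h.eigenvectorUnitary
  · have := h.spectral_theorem
    rw [Unitary.conjStarAlgAut_apply] at this
    simpa [star_eq_conjTranspose, Function.comp_def] using this

lemma frobNorm_le {n : ℕ} [NeZero n] {A : Matrix (Fin n) (Fin n) ℝ} (hA : A.PosDef) :
    frobNorm A ≤ √n * eigval A 0 := by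
  have h := hA.isHermitian
  obtain ⟨U, hU, -, hAU⟩ := spectral_decomp h
  have h0 : 0 ≤ eigval A 0 := (hA.eigenvalues_pos 0).le.trans (le_eigval_zero_s17 h 0)
  have htr : ∑ i, ∑ j, A i j ^ 2 = ∑ i, h.eigenvalues i ^ 2 := by
    have h1 : ∑ i, ∑ j, A i j ^ 2 = (A * Aᵀ).trace := by
      simp [Matrix.trace, Matrix.mul_apply, sq]
    have h2 : A * Aᵀ = U * (Matrix.diagonal h.eigenvalues * Matrix.diagonal h.eigenvalues * Uᵀ) := by
      set D := Matrix.diagonal h.eigenvalues with hD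
      have hDt : Dᵀ = D := Matrix.diagonal_transpose _
      rw [hAU, Matrix.transpose_mul, Matrix.transpose_mul, Matrix.transpose_transpose, hDt]
      calc U * D * Uᵀ * (U * (D * Uᵀ)) = U * D * (Uᵀ * U) * (D * Uᵀ) := by noncomm_ring
        _ = _ := by rw [hU]; noncomm_ring
    rw [h1, h2, Matrix.trace_mul_comm, Matrix.mul_assoc, hU, Matrix.mul_one,
      Matrix.diagonal_mul_diagonal, Matrix.trace_diagonal]
    simp [sq]
  rw [frobNorm, htr]
  calc √(∑ i, h.eigenvalues i ^ 2) ≤ √(n * eigval A 0 ^ 2) := by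
        apply Real.sqrt_le_sqrt
        calc ∑ i, h.eigenvalues i ^ 2 ≤ ∑ _i : Fin n, eigval A 0 ^ 2 :=
              Finset.sum_le_sum fun i _ =>
                pow_le_pow_left₀ (hA.eigenvalues_pos i).le (le_eigval_zero_s17 h i) 2
          _ = n * eigval A 0 ^ 2 := by simp
    _ = √n * eigval A 0 := by rw [Real.sqrt_mul (Nat.cast_nonneg n), Real.sqrt_sq h0]

/-- Rayleigh quotient lower bound: `λ_n(A) ‖x‖² ≤ xᵀ A x`. -/
lemma eigval_last_mul_le {n : ℕ} [NeZero n] {A : Matrix (Fin n) (Fin n) ℝ} (h : A.IsHermitian)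
    (x : Fin n → ℝ) : eigval A (Fin.rev 0) * (x ⬝ᵥ x) ≤ x ⬝ᵥ (A *ᵥ x) := by
  obtain ⟨U, -, hU, hAU⟩ := spectral_decomp h
  have h1 : x ⬝ᵥ (A *ᵥ x) = (Uᵀ *ᵥ x) ⬝ᵥ (Matrix.diagonal h.eigenvalues *ᵥ (Uᵀ *ᵥ x)) := by
    conv_lhs => rw [hAU]
    rw [← Matrix.mulVec_mulVec, ← Matrix.mulVec_mulVec, Matrix.dotProduct_mulVec,
      ← Matrix.mulVec_transpose]
  have h2 : x ⬝ᵥ x = (Uᵀ *ᵥ x) ⬝ᵥ (Uᵀ *ᵥ x) := by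
    rw [← Matrix.vecMul_transpose, Matrix.transpose_transpose, ← Matrix.dotProduct_mulVec,
      ← Matrix.vecMul_transpose, Matrix.vecMul_vecMul, hU, Matrix.vecMul_one]
  rw [h1, h2]
  simp only [dotProduct, Matrix.mulVec_diagonal, Finset.mul_sum]
  refine Finset.sum_le_sum fun i _ => ?_
  nlinarith [mul_le_mul_of_nonneg_right (eigval_last_le_s17 h i) (mul_self_nonneg ((Uᵀ *ᵥ x) i))]

lemma abs_diag_le_specNorm {n : ℕ} (M : Matrix (Fin n) (Fin n) ℝ) (i : Fin n) :
    |M i i| ≤ specNorm M := by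
  set e : EuclideanSpace ℝ (Fin n) := EuclideanSpace.single i 1 with he
  have h1 : (Matrix.toEuclideanLin M e) i = M i i := by
    simp [he, Matrix.toLpLin_apply]
  have h2 := PiLp.norm_apply_le (Matrix.toEuclideanLin M e) i
  have h3 := (LinearMap.toContinuousLinearMap (Matrix.toEuclideanLin M)).le_opNorm e
  have h4 : ‖e‖ = 1 := by simp [he]
  rw [h4, mul_one] at h3
  rw [h1, Real.norm_eq_abs] at h2
  exact h2.trans h3

/-- Remark on the choice of u_ℓ: bound on off(Ã)/min_i ã_ii. -/
theorem stmt17 {n : ℕ} [NeZero n] (A Q : Matrix (Fin n) (Fin n) ℝ) (ε c : ℝ)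
    (hA : A.PosDef) (hQ : specNorm (Qᵀ * Q - 1) ≤ ε) (hε : ε < 1) (hc : 0 ≤ c)
    (hoff : offQ (Qᵀ * A * Q) ≤ c * frobNorm A) :
    offQ (Qᵀ * A * Q) / (⨅ i, (Qᵀ * A * Q) i i) ≤
      c * (n : ℝ) ^ ((1 : ℝ) / 2) * kappa A / (1 - ε) := by
  have hpos := eigval_last_pos hA
  have hε' : 0 < 1 - ε := sub_pos.mpr hε
  have hmin : eigval A (Fin.rev 0) * (1 - ε) ≤ ⨅ i, (Qᵀ * A * Q) i i := by
    refine le_ciInf fun i => ?_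
    have hcol : 1 - ε ≤ Qᵀ i ⬝ᵥ Qᵀ i := by
      have h1 := (abs_le.mp ((abs_diag_le_specNorm (Qᵀ * Q - 1) i).trans hQ)).1
      have h2 : (Qᵀ * Q - 1) i i = Qᵀ i ⬝ᵥ Qᵀ i - 1 := by
        simp [Matrix.mul_apply, dotProduct]
      linarith
    have hentry : (Qᵀ * A * Q) i i = Qᵀ i ⬝ᵥ (A *ᵥ Qᵀ i) := by
      rw [Matrix.mul_assoc, Matrix.mul_apply]
      simp [dotProduct, Matrix.mulVec, Matrix.mul_apply]
    rw [hentry]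
    exact (mul_le_mul_of_nonneg_left hcol hpos.le).trans (eigval_last_mul_le hA.isHermitian _)
  have hnum : offQ (Qᵀ * A * Q) ≤ c * (√n * eigval A 0) :=
    hoff.trans (mul_le_mul_of_nonneg_left (frobNorm_le hA) hc)
  have hnum0 : 0 ≤ offQ (Qᵀ * A * Q) := Real.sqrt_nonneg _
  calc offQ (Qᵀ * A * Q) / (⨅ i, (Qᵀ * A * Q) i i)
      ≤ c * (√n * eigval A 0) / (eigval A (Fin.rev 0) * (1 - ε)) :=
        div_le_div₀ (hnum0.trans hnum) hnum (mul_pos hpos hε') hmin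
    _ = c * (n : ℝ) ^ ((1 : ℝ) / 2) * kappa A / (1 - ε) := by
        rw [kappa, ← Real.sqrt_eq_rpow]
        field_simp
end
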